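/- Positivity preservation of the high-order multidimensional DG scheme with penalty term (Theorem 4.3, one cell, one forward-Euler step): Let d = 2, N ≥ 1, |K| > 0, edge lengths ℓ₁,…,ℓ_N > 0 with perimeter |∂K| = Σⱼ ℓⱼ, and unit outward normals ξ⁽¹⁾,…,ξ⁽ᴺ⁾ ∈ ℝ² with Σⱼ ℓⱼ ξ⁽ʲ⁾ = 0. Let Q ≥ 1 with edge-quadrature weights ω₁,…,ω_Q > 0, Σ_q ω_q = 1. For each edge j and quadrature index q let U_{jq}^{int}, U_{jq}^{ext} ∈ 𝒢 (with densities ρ_{jq}^{int}, velocities v_{jq}^{int}, magnetic fields B_{jq}^{int}, B_{jq}^{ext}). Suppose the cell average decomposes with positive weights as Ū = Σ_{q=1}^{Q̃} ϖ̃_q Ũ_q + Σ_{j=1}^{N} Σ_{q=1}^{Q} ϖ_{jq} U_{jq}^{int}, where Ũ_q ∈ 𝒢, ϖ̃_q > 0, ϖ_{jq} > 0 and Σ_q ϖ̃_q + Σ_{j,q} ϖ_{jq} = 1 (a quadrature exact for the degree-k solution polynomial whose boundary nodes are the edge Gauss points). Assume the locally divergence-free identity Σ_{j=1}^{N} Σ_{q=1}^{Q}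 ℓⱼ ω_q ⟨ξ⁽ʲ⁾, B_{jq}^{int}⟩ = 0 (valid since the inner magnetic polynomial is divergence-free on K and the edge quadrature is exact). For each (j, q) let wave speeds satisfy σ_{jq}^{r} ≥ α_r(U_{jq}^{ext}, U_{jq}^{int}; ξ⁽ʲ⁾) and σ_{jq}^{l} ≤ α_l(U_{jq}^{int}, U_{jq}^{ext}; ξ⁽ʲ⁾), with σ_{jq}^{±} the clamped speeds and η_{jq} = σ_{jq}^{−}/(σ_{jq}^{+} − σ_{jq}^{−}) ∈ [−1, 0]. Define α̂_{jq} = max{ ⟨ξ⁽ʲ⁾, v_{jq}^{int}⟩ , |∂K|⁻¹ Σ_{i=1}^{N} ℓᵢ ⟨ξ⁽ʲ⁾ − ξ⁽ⁱ⁾, (√ρ_{jq}^{int} v_{jq}^{int} + √ρ_{iq}^{int} v_{iq}^{int})/(√ρ_{jq}^{int} + √ρ_{iq}^{int})⟩ } + 𝒞(U_{jq}^{int}; ξ⁽ʲ⁾) + 2|∂K|⁻¹ Σ_{i=1}^{N} ℓᵢ |B_{jq}^{int} − B_{iq}^{int}|/(√ρ_{jq}^{int} + √ρ_{iq}^{int}),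 and α_{jq} = α̂_{jq} − σ_{jq}^{−} − η_{jq}·(ρ_{jq}^{int})^{-1/2}·|⟨ξ⁽ʲ⁾, B_{jq}^{int} − B_{jq}^{ext}⟩|. If Δt > 0 satisfies the CFL condition Δt·(ℓⱼ/|K|)·α_{jq} < ϖ_{jq}/ω_q for all j, q, then the update Ū' = Ū − (Δt/|K|) Σ_{j,q} ℓⱼ ω_q [ F̂(U_{jq}^{int}, U_{jq}^{ext}; ξ⁽ʲ⁾) − η_{jq} ⟨ξ⁽ʲ⁾, B_{jq}^{ext} − B_{jq}^{int}⟩ S(U_{jq}^{int}) ] belongs to 𝒢. -/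

import Mathlib

noncomputable section

open Finset

/-- An MHD state `U = (ρ, m, B, E)` viewed as a vector in `ℝ⁸`. -/
abbrev MHDState := Fin 8 → ℝ

namespace MHD

/-- Build a state from density, momentum, magnetic field, total energy. -/
def mk (ρ : ℝ) (m B : Fin 3 → ℝ) (E : ℝ) : MHDState :=
  ![ρ, m 0, m 1, m 2, B 0, B 1, B 2, E]

/-- Density component. -/
def dens (U : MHDState) : ℝ := U 0

/-- Momentum components. -/
def mom (U : MHDState) : Fin 3 → ℝ := ![U 1, U 2, U 3]

/-- Magnetic field components. -/
def magB (U : MHDState) : Fin 3 → ℝ := ![U 4, U 5, U 6]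

/-- Total energy component. -/
def toten (U : MHDState) : ℝ := U 7

/-- Euclidean dot product on `ℝ³`. -/
def dot3 (a b : Fin 3 → ℝ) : ℝ := ∑ k, a k * b k

/-- Squared Euclidean norm on `ℝ³`. -/
def sq3 (a : Fin 3 → ℝ) : ℝ := dot3 a a

/-- Euclidean norm on `ℝ³`. -/
def norm3 (a : Fin 3 → ℝ) : ℝ := Real.sqrt (sq3 a)

/-- Velocity `v = m / ρ`. -/
def vel (U : MHDState) : Fin 3 → ℝ := fun k => mom U k / dens U

/-- Internal energy `𝓔(U) = E − (|m|²/ρ + |B|²)/2`. -/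
def intE (U : MHDState) : ℝ := toten U - (sq3 (mom U) / dens U + sq3 (magB U)) / 2

/-- Specific internal energy `e = 𝓔(U)/ρ`. -/
def specE (U : MHDState) : ℝ := intE U / dens U

/-- The admissible state set `𝒢`. -/
def Gset : Set MHDState := {U | 0 < dens U ∧ 0 < intE U}

/-- The set `𝒢_ρ` of states with positive density. -/
def Grho : Set MHDState := {U | 0 < dens U}

/-- Euclidean dot product on `ℝ⁸`. -/
def dot8 (U V : MHDState) : ℝ := ∑ i, U i * V i

/-- The vector `n* = (|v*|²/2, −v*, −B*, 1)`. -/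
def nstar (vs Bs : Fin 3 → ℝ) : MHDState :=
  mk (sq3 vs / 2) (fun k => -vs k) (fun k => -Bs k) 1

/-- The set `𝒢*`. -/
def GstarSet : Set MHDState :=
  {U | 0 < dens U ∧ ∀ vs Bs : Fin 3 → ℝ, 0 < dot8 U (nstar vs Bs) + sq3 Bs / 2}

/-- Equation of state assumption: for `ρ > 0`, `e > 0 ↔ p(ρ,e) > 0`. -/
def IsEOS (pfun : ℝ → ℝ → ℝ) : Prop :=
  ∀ ρ e : ℝ, 0 < ρ → (0 < e ↔ 0 < pfun ρ e)

/-- Pressure of a state, via the equation of state. -/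
def pres (pfun : ℝ → ℝ → ℝ) (U : MHDState) : ℝ := pfun (dens U) (specE U)

/-- Total pressure `p + |B|²/2`. -/
def ptot (pfun : ℝ → ℝ → ℝ) (U : MHDState) : ℝ := pres pfun U + sq3 (magB U) / 2

/-- The `i`-th flux `F_i(U)`. -/
def flux (pfun : ℝ → ℝ → ℝ) (i : Fin 3) (U : MHDState) : MHDState :=
  mk (dens U * vel U i)
    (fun k => dens U * vel U i * vel U k - magB U i * magB U k
      + ptot pfun U * (if k = i then 1 else 0))
    (fun k => vel U i * magB U k - magB U i * vel U k)
    (vel U i * (toten U + ptot pfun U) - magB U i * dot3 (vel U) (magB U))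

/-- Directional inner product `⟨ξ, w⟩ = Σ_{k<d} ξ_k w_k` for `ξ ∈ ℝ^d`, `w ∈ ℝ³`, `d ≤ 3`. -/
def dirDot {d : ℕ} (hd : d ≤ 3) (ξ : Fin d → ℝ) (w : Fin 3 → ℝ) : ℝ :=
  ∑ k, ξ k * w (Fin.castLE hd k)

/-- Directional flux `⟨ξ, F(U)⟩ = Σ_{i<d} ξ_i F_i(U)`. -/
def dirFlux (pfun : ℝ → ℝ → ℝ) {d : ℕ} (hd : d ≤ 3) (ξ : Fin d → ℝ) (U : MHDState) :
    MHDState :=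
  ∑ i, ξ i • flux pfun (Fin.castLE hd i) U

/-- `ξ` is a unit vector. -/
def unitVec {d : ℕ} (ξ : Fin d → ℝ) : Prop := (∑ k, (ξ k) ^ 2) = 1

/-- `𝒞_s(U) = p / (ρ √(2e))`. -/
def soundC (pfun : ℝ → ℝ → ℝ) (U : MHDState) : ℝ :=
  pres pfun U / (dens U * Real.sqrt (2 * specE U))

/-- `𝒞(U; ξ)`. -/
def waveC (pfun : ℝ → ℝ → ℝ) {d : ℕ} (hd : d ≤ 3) (ξ : Fin d → ℝ) (U : MHDState) : ℝ :=
  Real.sqrt ((soundC pfun U ^ 2 + sq3 (magB U) / dens U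
    + Real.sqrt ((soundC pfun U ^ 2 + sq3 (magB U) / dens U) ^ 2
      - 4 * soundC pfun U ^ 2 * dirDot hd ξ (magB U) ^ 2 / dens U)) / 2)

/-- Roe-type averaged velocity `v̄ = (√ρ v + √ρ̃ ṽ)/(√ρ + √ρ̃)`. -/
def roeV (U Ut : MHDState) : Fin 3 → ℝ := fun k =>
  (Real.sqrt (dens U) * vel U k + Real.sqrt (dens Ut) * vel Ut k)
    / (Real.sqrt (dens U) + Real.sqrt (dens Ut))

/-- `α_r(U, Ũ; ξ)`. -/
def alphaR (pfun : ℝ → ℝ → ℝ) {d : ℕ} (hd : d ≤ 3) (ξ : Fin d → ℝ) (U Ut : MHDState) : ℝ :=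
  max (dirDot hd ξ (vel U)) (dirDot hd ξ (roeV U Ut)) + waveC pfun hd ξ U
    + norm3 (magB U - magB Ut) / (Real.sqrt (dens U) + Real.sqrt (dens Ut))

/-- `α_l(U, Ũ; ξ)`. -/
def alphaL (pfun : ℝ → ℝ → ℝ) {d : ℕ} (hd : d ≤ 3) (ξ : Fin d → ℝ) (U Ut : MHDState) : ℝ :=
  min (dirDot hd ξ (vel U)) (dirDot hd ξ (roeV U Ut)) - waveC pfun hd ξ U
    - norm3 (magB U - magB Ut) / (Real.sqrt (dens U) + Real.sqrt (dens Ut))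

/-- `α_⋆(U, Ũ; ξ)`. -/
def alphaS (pfun : ℝ → ℝ → ℝ) {d : ℕ} (hd : d ≤ 3) (ξ : Fin d → ℝ) (U Ut : MHDState) : ℝ :=
  max (|dirDot hd ξ (vel U)|) (|dirDot hd ξ (roeV U Ut)|) + waveC pfun hd ξ U
    + norm3 (magB U - magB Ut) / (Real.sqrt (dens U) + Real.sqrt (dens Ut))

/-- The vector `θ(U, v*, B*) = 2^{−1/2}(B − B*, √ρ(v − v*), √(2ρe)) ∈ ℝ⁷`. -/
def theta (U : MHDState) (vs Bs : Fin 3 → ℝ) : Fin 7 → ℝ :=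
  ![(magB U 0 - Bs 0) / Real.sqrt 2,
    (magB U 1 - Bs 1) / Real.sqrt 2,
    (magB U 2 - Bs 2) / Real.sqrt 2,
    Real.sqrt (dens U) * (vel U 0 - vs 0) / Real.sqrt 2,
    Real.sqrt (dens U) * (vel U 1 - vs 1) / Real.sqrt 2,
    Real.sqrt (dens U) * (vel U 2 - vs 2) / Real.sqrt 2,
    Real.sqrt (2 * intE U) / Real.sqrt 2]

/-- `|θ|²`. -/
def thetaSq (U : MHDState) (vs Bs : Fin 3 → ℝ) : ℝ := ∑ k, theta U vs Bs k ^ 2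

/-- Godunov–Powell source vector `S(U) = (0, B, v, v·B)`. -/
def source (U : MHDState) : MHDState := mk 0 (magB U) (vel U) (dot3 (vel U) (magB U))

/-- HLL numerical flux with clamped wave speeds `σm ≤ 0 ≤ σp`. -/
def hllFlux (pfun : ℝ → ℝ → ℝ) {d : ℕ} (hd : d ≤ 3) (ξ : Fin d → ℝ)
    (Um Up : MHDState) (σm σp : ℝ) : MHDState :=
  (σp - σm)⁻¹ • (σp • dirFlux pfun hd ξ Um - σm • dirFlux pfun hd ξ Up
    + (σm * σp) • (Up - Um))

/-- HLL intermediate state `H(U⁻, U⁺; ξ)`. -/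
def hllMid (pfun : ℝ → ℝ → ℝ) {d : ℕ} (hd : d ≤ 3) (ξ : Fin d → ℝ)
    (Um Up : MHDState) (σm σp : ℝ) : MHDState :=
  (σp - σm)⁻¹ • (σp • Up - dirFlux pfun hd ξ Up - σm • Um + dirFlux pfun hd ξ Um)

/-- The quantity `α̂_j` of Theorem 2.3. -/
def alphaHat (pfun : ℝ → ℝ → ℝ) {d : ℕ} (hd : d ≤ 3) {N : ℕ}
    (s : Fin N → ℝ) (ξ : Fin N → Fin d → ℝ) (U : Fin N → MHDState) (j : Fin N) : ℝ :=
  max (dirDot hd (ξ j) (vel (U j)))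
      ((∑ i, s i)⁻¹ * ∑ i, s i * dirDot hd (fun k => ξ j k - ξ i k) (roeV (U j) (U i)))
  + waveC pfun hd (ξ j) (U j)
  + 2 * (∑ i, s i)⁻¹ * ∑ i, s i *
      (norm3 (magB (U j) - magB (U i)) / (Real.sqrt (dens (U j)) + Real.sqrt (dens (U i))))

def d1le3 : (1 : ℕ) ≤ 3 := by omega
def d2le3 : (2 : ℕ) ≤ 3 := by omega

/-- In one dimension the direction `ξ = 1`. -/
def xi1 : Fin 1 → ℝ := fun _ => 1

theorem dot8_add (U V W : MHDState) : dot8 (U + V) W = dot8 U W + dot8 V W := by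
  simp [dot8, add_mul, Finset.sum_add_distrib]

theorem dot8_sub (U V W : MHDState) : dot8 (U - V) W = dot8 U W - dot8 V W := by
  simp [dot8, sub_mul, Finset.sum_sub_distrib]

theorem dot8_smul (c : ℝ) (U W : MHDState) : dot8 (c • U) W = c * dot8 U W := by
  simp [dot8, Finset.mul_sum, mul_assoc]

theorem dot8_sum {ι : Type*} (s : Finset ι) (U : ι → MHDState) (W : MHDState) :
    dot8 (∑ i ∈ s, U i) W = ∑ i ∈ s, dot8 (U i) W := by
  simp only [dot8, Finset.sum_apply, Finset.sum_mul]
  exact Finset.sum_comm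

theorem sq3_nonneg (a : Fin 3 → ℝ) : 0 ≤ sq3 a := by
  exact Finset.sum_nonneg fun k (_ : k ∈ Finset.univ) => mul_self_nonneg (a k)

theorem norm3_nonneg (a : Fin 3 → ℝ) : 0 ≤ norm3 a := Real.sqrt_nonneg _

theorem norm3_sq (a : Fin 3 → ℝ) : norm3 a ^ 2 = sq3 a := Real.sq_sqrt (sq3_nonneg a)

theorem norm3_sub_comm (a b : Fin 3 → ℝ) : norm3 (a - b) = norm3 (b - a) := by
  simp only [norm3, sq3, dot3, Pi.sub_apply]
  congr 2
  funext k
  ring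

theorem dot3_sq_le (a b : Fin 3 → ℝ) : dot3 a b ^ 2 ≤ sq3 a * sq3 b := by
  simpa only [sq3, dot3, sq] using Finset.sum_mul_sq_le_sq_mul_sq Finset.univ a b

theorem abs_dot3_le (a b : Fin 3 → ℝ) : |dot3 a b| ≤ norm3 a * norm3 b := by
  refine abs_le_of_sq_le_sq ?_ (mul_nonneg (norm3_nonneg a) (norm3_nonneg b))
  rw [mul_pow, norm3_sq, norm3_sq]
  exact dot3_sq_le a b

/-- Extension by zero of a direction in `ℝ^d` to `ℝ³`. -/
def extDir {d : ℕ} (ξ : Fin d → ℝ) : Fin 3 → ℝ :=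
  fun k => if h : (k : ℕ) < d then ξ ⟨k, h⟩ else 0

theorem dirDot_eq_dot3 {d : ℕ} (hd : d ≤ 3) (ξ : Fin d → ℝ) (w : Fin 3 → ℝ) :
    dirDot hd ξ w = dot3 (extDir ξ) w := by
  interval_cases d <;> simp [dirDot, dot3, extDir, Fin.sum_univ_succ]

theorem sq3_extDir {d : ℕ} (hd : d ≤ 3) {ξ : Fin d → ℝ} (hξ : unitVec ξ) :
    sq3 (extDir ξ) = 1 := by
  rw [← hξ]
  interval_cases d <;> simp [sq3, dot3, extDir, Fin.sum_univ_succ, sq]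

theorem extDir_sub {d : ℕ} (ξ ζ : Fin d → ℝ) :
    extDir (fun k => ξ k - ζ k) = extDir ξ - extDir ζ := by
  funext k
  by_cases h : (k : ℕ) < d <;> simp [extDir, h]

/-- The energy of `U` relative to a reference velocity and magnetic field. -/
def relE (U : MHDState) (vs Bs : Fin 3 → ℝ) : ℝ :=
  (dens U * sq3 (vel U - vs) + sq3 (magB U - Bs)) / 2 + intE U

theorem dot8_nstar {U : MHDState} (hU : dens U ≠ 0) (vs Bs : Fin 3 → ℝ) :
    dot8 U (nstar vs Bs) = relE U vs Bs - sq3 Bs / 2 := by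
  simp only [dens] at hU
  simp [dot8, nstar, relE, mk, sq3, dot3, vel, mom, magB, intE, toten, dens, Fin.sum_univ_succ]
  field_simp
  ring

theorem dot8_flux_nstar (pfun : ℝ → ℝ → ℝ) {U : MHDState} (hU : dens U ≠ 0) (vs Bs : Fin 3 → ℝ)
    (i : Fin 3) :
    dot8 (flux pfun i U) (nstar vs Bs) =
      vel U i * dot8 U (nstar vs Bs) + ptot pfun U * (vel U i - vs i)
        - magB U i * (dot3 (vel U - vs) (magB U - Bs) - dot3 vs Bs) := by
  simp only [dens] at hU
  generalize hP : ptot pfun U = P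
  fin_cases i <;>
  · simp [dot8, flux, hP, nstar, mk, sq3, dot3, vel, mom, magB, toten, dens, Fin.sum_univ_succ]
    field_simp
    ring

theorem dot8_source_nstar (U : MHDState) (vs Bs : Fin 3 → ℝ) :
    dot8 (source U) (nstar vs Bs) = dot3 (vel U - vs) (magB U - Bs) - dot3 vs Bs := by
  simp [dot8, source, nstar, mk, dot3, Fin.sum_univ_succ]
  ring

theorem dot8_dirFlux_nstar (pfun : ℝ → ℝ → ℝ) {d : ℕ} (hd : d ≤ 3) (ξ : Fin d → ℝ)
    {U : MHDState} (hU : dens U ≠ 0) (vs Bs : Fin 3 → ℝ) :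
    dot8 (dirFlux pfun hd ξ U) (nstar vs Bs) =
      dirDot hd ξ (vel U) * (relE U vs Bs - sq3 Bs / 2)
        + ptot pfun U * (dirDot hd ξ (vel U) - dirDot hd ξ vs)
        - dirDot hd ξ (magB U) * (dot3 (vel U - vs) (magB U - Bs) - dot3 vs Bs) := by
  simp only [dirFlux, dot8_sum, dot8_smul, dot8_flux_nstar pfun hU, ← dot8_nstar hU, dirDot]
  rw [Finset.sum_mul, Finset.sum_mul, ← Finset.sum_sub_distrib, Finset.mul_sum,
    ← Finset.sum_add_distrib, ← Finset.sum_sub_distrib]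
  exact Finset.sum_congr rfl fun k _ => by ring

theorem dens_dirFlux (pfun : ℝ → ℝ → ℝ) {d : ℕ} (hd : d ≤ 3) (ξ : Fin d → ℝ) (U : MHDState) :
    dens (dirFlux pfun hd ξ U) = dens U * dirDot hd ξ (vel U) := by
  simp only [dens, dirFlux, Finset.sum_apply, Pi.smul_apply, smul_eq_mul, dirDot, Finset.mul_sum]
  exact Finset.sum_congr rfl fun k _ => by simp [flux, mk, dens]; ring

theorem specE_pos {U : MHDState} (hU : U ∈ Gset) : 0 < specE U := div_pos hU.2 hU.1

theorem pres_pos {pfun : ℝ → ℝ → ℝ} (hEOS : IsEOS pfun) {U : MHDState} (hU : U ∈ Gset) :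
    0 < pres pfun U := (hEOS _ _ hU.1).1 (specE_pos hU)

theorem soundC_pos {pfun : ℝ → ℝ → ℝ} (hEOS : IsEOS pfun) {U : MHDState} (hU : U ∈ Gset) :
    0 < soundC pfun U :=
  div_pos (pres_pos hEOS hU)
    (mul_pos hU.1 (Real.sqrt_pos.2 (mul_pos two_pos (specE_pos hU))))

theorem waveC_pos {pfun : ℝ → ℝ → ℝ} (hEOS : IsEOS pfun) {d : ℕ} (hd : d ≤ 3) (ξ : Fin d → ℝ)
    {U : MHDState} (hU : U ∈ Gset) : 0 < waveC pfun hd ξ U := by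
  have h1 := soundC_pos hEOS hU
  have h2 : 0 ≤ sq3 (magB U) / dens U := div_nonneg (sq3_nonneg _) hU.1.le
  unfold waveC
  positivity

theorem waveC_neg (pfun : ℝ → ℝ → ℝ) {d : ℕ} (hd : d ≤ 3) (ξ : Fin d → ℝ) (U : MHDState) :
    waveC pfun hd (-ξ) U = waveC pfun hd ξ U := by
  simp [waveC, dirDot]

/-- The larger root of the quadratic that determines the fast speed. -/
theorem fast_root_props {c β b : ℝ} (hb : b ^ 2 ≤ β) :
    let l := (c ^ 2 + β + √((c ^ 2 + β) ^ 2 - 4 * c ^ 2 * b ^ 2)) / 2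
    c ^ 2 ≤ l ∧ β ≤ l ∧ (l - c ^ 2) * (l - β) = c ^ 2 * (β - b ^ 2) := by
  intro l
  have hD : (c ^ 2 - β) ^ 2 ≤ (c ^ 2 + β) ^ 2 - 4 * c ^ 2 * b ^ 2 := by
    nlinarith [mul_le_mul_of_nonneg_left hb (sq_nonneg c)]
  have habs := abs_le.1 (Real.abs_le_sqrt hD)
  have hs := Real.sq_sqrt ((sq_nonneg _).trans hD)
  refine ⟨by simp only [l]; linarith, by simp only [l]; linarith, ?_⟩
  simp only [l]
  linear_combination hs / 4

theorem transverse_dot_sq_le {e : Fin 3 → ℝ} (he : sq3 e = 1) (y β : Fin 3 → ℝ) :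
    (dot3 y β - dot3 e y * dot3 e β) ^ 2 ≤
      (sq3 y - dot3 e y ^ 2) * (sq3 β - dot3 e β ^ 2) := by
  have key : ∀ a b : Fin 3 → ℝ,
      dot3 (a - dot3 e a • e) (b - dot3 e b • e) = dot3 a b - dot3 e a * dot3 e b := by
    intro a b
    have h : dot3 (a - dot3 e a • e) (b - dot3 e b • e) =
        dot3 a b - 2 * (dot3 e a * dot3 e b) + dot3 e a * dot3 e b * sq3 e := by
      simp only [sq3, dot3, Fin.sum_univ_three, Pi.sub_apply, Pi.smul_apply, smul_eq_mul]
      ring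
    rw [h, he]
    ring
  have h := dot3_sq_le (y - dot3 e y • e) (β - dot3 e β • e)
  simp only [sq3, key] at h
  simpa only [sq3, sq] using h

theorem sq3_dir_le {e : Fin 3 → ℝ} (he : sq3 e = 1) (y : Fin 3 → ℝ) :
    dot3 e y ^ 2 ≤ sq3 y := by
  simpa [he] using dot3_sq_le e y

theorem fast_form_le {e y β : Fin 3 → ℝ} (he : sq3 e = 1) {c l : ℝ} (hc : c ^ 2 ≤ l)
    (hβ : sq3 β ≤ l) (hl : (l - c ^ 2) * (l - sq3 β) = c ^ 2 * (sq3 β - dot3 e β ^ 2)) (z : ℝ) :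
    sq3 ((c * z + dot3 y β) • e - dot3 e β • y) ≤ l * (z ^ 2 + sq3 y) := by
  have h1 : sq3 ((c * z + dot3 y β) • e - dot3 e β • y) =
      (c * z + dot3 y β) ^ 2 * sq3 e - 2 * (c * z + dot3 y β) * dot3 e β * dot3 e y
        + dot3 e β ^ 2 * sq3 y := by
    simp only [sq3, dot3, Fin.sum_univ_three, Pi.sub_apply, Pi.smul_apply, smul_eq_mul]
    ring
  rw [h1, he]
  have hT := transverse_dot_sq_le he y β
  have hY := sq3_dir_le he y
  generalize sq3 β = b2 at *
  generalize dot3 e β = b at *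
  generalize hy : dot3 e y = y1 at *
  generalize hYY : sq3 y - y1 ^ 2 = Y at *
  have hsy : sq3 y = Y + y1 ^ 2 := by linarith
  rw [hsy]
  generalize ht : dot3 y β - y1 * b = t at *
  have hd : dot3 y β = t + y1 * b := by linarith
  rw [hd]
  have hY0 : 0 ≤ Y := by linarith
  have hcross : |2 * (c * z * t)| ≤ (l - c ^ 2) * z ^ 2 + (l - b2) * Y := by
    have hA : 0 ≤ (l - c ^ 2) * z ^ 2 := mul_nonneg (by linarith) (sq_nonneg z)
    have hB : 0 ≤ (l - b2) * Y := mul_nonneg (by linarith) hY0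
    refine abs_le_of_sq_le_sq ?_ (add_nonneg hA hB)
    have h2 : (c * z) ^ 2 * t ^ 2 ≤ (c * z) ^ 2 * (Y * (b2 - b ^ 2)) :=
      mul_le_mul_of_nonneg_left hT (sq_nonneg _)
    have h3 : (c * z) ^ 2 * (Y * (b2 - b ^ 2)) = ((l - c ^ 2) * z ^ 2) * ((l - b2) * Y) := by
      linear_combination -(z ^ 2 * Y) * hl
    nlinarith [sq_nonneg ((l - c ^ 2) * z ^ 2 - (l - b2) * Y)]
  have := (abs_le.1 hcross).2
  have hy1 : 0 ≤ (l - b2) * y1 ^ 2 := mul_nonneg (by linarith) (sq_nonneg _)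
  have hl0 : 0 ≤ l * y1 ^ 2 := mul_nonneg ((sq_nonneg c).trans hc) (sq_nonneg _)
  nlinarith

theorem dot3_smul_left (c : ℝ) (a b : Fin 3 → ℝ) : dot3 (c • a) b = c * dot3 a b := by
  simp [dot3, Finset.mul_sum, mul_assoc]

theorem dot3_smul_right (c : ℝ) (a b : Fin 3 → ℝ) : dot3 a (c • b) = c * dot3 a b := by
  simp only [dot3, Finset.mul_sum, Pi.smul_apply, smul_eq_mul]
  exact Finset.sum_congr rfl fun k _ => by ring

theorem dot3_sub_right (a b c : Fin 3 → ℝ) : dot3 a (b - c) = dot3 a b - dot3 a c := by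
  simp [dot3, mul_sub, Finset.sum_sub_distrib]

theorem dot3_comm (a b : Fin 3 → ℝ) : dot3 a b = dot3 b a := by
  simp only [dot3, mul_comm]

theorem sq3_smul (c : ℝ) (a : Fin 3 → ℝ) : sq3 (c • a) = c ^ 2 * sq3 a := by
  simp only [sq3, dot3_smul_left, dot3_smul_right]
  ring

theorem pres_eq_soundC_mul (pfun : ℝ → ℝ → ℝ) {U : MHDState} (hU : U ∈ Gset) :
    pres pfun U = soundC pfun U * (√(dens U) * √(2 * intE U)) := by
  have hρ : 0 < dens U := hU.1
  have h : √(dens U) * √(2 * intE U) = dens U * √(2 * specE U) := by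
    have : 2 * intE U = dens U * (2 * specE U) := by
      rw [specE]
      field_simp
    rw [this, Real.sqrt_mul hρ.le, ← mul_assoc, Real.mul_self_sqrt hρ.le]
  have hne : dens U * √(2 * specE U) ≠ 0 :=
    (mul_pos hρ (Real.sqrt_pos.2 (mul_pos two_pos (specE_pos hU)))).ne'
  rw [h, soundC, div_mul_cancel₀ _ hne]

theorem dot3_le_of_sq3_le {u g : Fin 3 → ℝ} {C r : ℝ} (hC : 0 < C)
    (h : sq3 g ≤ C ^ 2 * r) : dot3 u g ≤ C * (sq3 u + r) / 2 := by
  refine le_of_mul_le_mul_left ?_ hC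
  have h1 := (le_abs_self _).trans (abs_dot3_le u g)
  have h2 := mul_le_mul_of_nonneg_left h1 hC.le
  nlinarith [sq_nonneg (C * norm3 u - norm3 g), norm3_sq u, norm3_sq g]

theorem fast_wave_bound {pfun : ℝ → ℝ → ℝ} (hEOS : IsEOS pfun) {d : ℕ} (hd : d ≤ 3)
    {ξ : Fin d → ℝ} (hξ : unitVec ξ) {U : MHDState} (hU : U ∈ Gset) (vs Bs : Fin 3 → ℝ) :
    pres pfun U * dirDot hd ξ (vel U - vs)
        + dirDot hd ξ (vel U - vs) * dot3 (magB U - Bs) (magB U)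
        - dirDot hd ξ (magB U) * dot3 (vel U - vs) (magB U - Bs)
      ≤ waveC pfun hd ξ U * relE U vs Bs := by
  have hρ : 0 < dens U := hU.1
  have hE : 0 < intE U := hU.2
  have he := sq3_extDir hd hξ
  have hC := waveC_pos hEOS hd ξ hU
  simp only [dirDot_eq_dot3]
  set e := extDir ξ
  set c := soundC pfun U
  set r := √(dens U)
  have hr : 0 < r := Real.sqrt_pos.2 hρ
  have hr2 : r ^ 2 = dens U := Real.sq_sqrt hρ.le
  set β : Fin 3 → ℝ := r⁻¹ • magB U with hβ
  have hsβ : sq3 (magB U) / dens U = sq3 β := by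
    rw [hβ, sq3_smul, inv_pow, hr2]
    ring
  have hbβ : dot3 e (magB U) ^ 2 / dens U = dot3 e β ^ 2 := by
    rw [hβ, dot3_smul_right, mul_pow, inv_pow, hr2]
    ring
  have hW : waveC pfun hd ξ U ^ 2 =
      (c ^ 2 + sq3 β + √((c ^ 2 + sq3 β) ^ 2 - 4 * c ^ 2 * dot3 e β ^ 2)) / 2 := by
    have h0 : 0 ≤ sq3 β := sq3_nonneg β
    rw [waveC, dirDot_eq_dot3, mul_div_assoc, hsβ, hbβ, Real.sq_sqrt]
    positivity
  obtain ⟨h1, h2, h3⟩ := fast_root_props (c := c) (sq3_dir_le he β)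
  rw [← hW] at h1 h2 h3
  have hg := fast_form_le (y := magB U - Bs) he h1 h2 h3 (√(2 * intE U))
  have hfin := dot3_le_of_sq3_le (u := r • (vel U - vs)) hC hg
  rw [sq3_smul, hr2, Real.sq_sqrt (by linarith), dot3_smul_left, dot3_sub_right, dot3_smul_right,
    dot3_smul_right, hβ, dot3_smul_right, dot3_smul_right, dot3_comm _ e] at hfin
  rw [pres_eq_soundC_mul pfun hU, show soundC pfun U = c from rfl, show √(dens U) = r from rfl]
  refine (le_of_eq ?_).trans (hfin.trans (le_of_eq ?_))
  · field_simp
  · rw [relE]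
    ring

theorem roeV_sub_eq {U V : MHDState} (hU : 0 < dens U) (hV : 0 < dens V) (vs : Fin 3 → ℝ) :
    roeV U V - vs = (√(dens U) + √(dens V))⁻¹ •
      (√(dens U) • (vel U - vs) + √(dens V) • (vel V - vs)) := by
  have h1 := Real.sqrt_pos.2 hU
  have h2 := Real.sqrt_pos.2 hV
  funext k
  simp only [roeV, Pi.sub_apply, Pi.add_apply, Pi.smul_apply, smul_eq_mul]
  field_simp
  ring

theorem roeV_comm (U V : MHDState) : roeV U V = roeV V U := by
  funext k
  simp only [roeV, add_comm]

theorem sq3_add_le (a b : Fin 3 → ℝ) : sq3 (a + b) ≤ 2 * (sq3 a + sq3 b) := by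
  have h : sq3 (a + b) + sq3 (a - b) = 2 * (sq3 a + sq3 b) := by
    simp only [sq3, dot3, Fin.sum_univ_three, Pi.add_apply, Pi.sub_apply]
    ring
  linarith [sq3_nonneg (a - b)]

theorem roe_magnetic_bound {U V : MHDState} (hU : U ∈ Gset) (hV : V ∈ Gset)
    {e : Fin 3 → ℝ} {c : ℝ} (he : norm3 e ≤ c) (vs Bs : Fin 3 → ℝ) :
    |dot3 e (roeV U V - vs) * (sq3 (magB U - Bs) / 2 - sq3 (magB V - Bs) / 2)| ≤
      c * (norm3 (magB U - magB V) / (√(dens U) + √(dens V)))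
        * (relE U vs Bs + relE V vs Bs) := by
  have hρU : 0 < dens U := hU.1
  have hρV : 0 < dens V := hV.1
  have hEU : 0 < intE U := hU.2
  have hEV : 0 < intE V := hV.2
  have hr : 0 < √(dens U) + √(dens V) := add_pos (Real.sqrt_pos.2 hρU) (Real.sqrt_pos.2 hρV)
  rw [roeV_sub_eq hρU hρV, dot3_smul_right]
  set y := √(dens U) • (vel U - vs) + √(dens V) • (vel V - vs) with hy
  have hT : sq3 (magB U - Bs) / 2 - sq3 (magB V - Bs) / 2 =
      dot3 (magB U - magB V) ((magB U - Bs) + (magB V - Bs)) / 2 := by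
    simp only [sq3, dot3, Fin.sum_univ_three, Pi.add_apply, Pi.sub_apply]
    ring
  rw [hT]
  set z := (magB U - Bs) + (magB V - Bs) with hz
  set D := magB U - magB V
  have hyb : sq3 y ≤ 2 * (dens U * sq3 (vel U - vs) + dens V * sq3 (vel V - vs)) := by
    have := sq3_add_le (√(dens U) • (vel U - vs)) (√(dens V) • (vel V - vs))
    rwa [sq3_smul, sq3_smul, Real.sq_sqrt hρU.le, Real.sq_sqrt hρV.le] at this
  have hzb := sq3_add_le (magB U - Bs) (magB V - Bs)
  have h1 : |dot3 e y| ≤ c * norm3 y :=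
    (abs_dot3_le e y).trans (mul_le_mul_of_nonneg_right he (norm3_nonneg y))
  have h2 := abs_dot3_le D z
  have hc : 0 ≤ c := (norm3_nonneg e).trans he
  have hyz : norm3 y * norm3 z / 2 ≤ relE U vs Bs + relE V vs Bs := by
    rw [relE, relE]
    nlinarith [sq_nonneg (norm3 y - norm3 z), norm3_sq y, norm3_sq z]
  calc |(√(dens U) + √(dens V))⁻¹ * dot3 e y * (dot3 D z / 2)|
      = (√(dens U) + √(dens V))⁻¹ * (|dot3 e y| * |dot3 D z|) / 2 := by
        rw [abs_mul, abs_mul, abs_div, abs_inv, abs_of_pos hr, abs_two]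
        ring
    _ ≤ (√(dens U) + √(dens V))⁻¹ * ((c * norm3 y) * (norm3 D * norm3 z)) / 2 := by
        gcongr
        exact mul_nonneg hc (norm3_nonneg y)
    _ = c * (norm3 D / (√(dens U) + √(dens V))) * (norm3 y * norm3 z / 2) := by ring
    _ ≤ _ := mul_le_mul_of_nonneg_left hyz
        (mul_nonneg hc (div_nonneg (norm3_nonneg D) hr.le))

theorem sq3_le_two_mul_relE {U : MHDState} (hU : U ∈ Gset) (vs Bs : Fin 3 → ℝ) :
    dens U * sq3 (vel U - vs) + sq3 (magB U - Bs) ≤ 2 * relE U vs Bs := by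
  have hE : 0 < intE U := hU.2
  rw [relE]
  linarith

theorem relE_pos {U : MHDState} (hU : U ∈ Gset) (vs Bs : Fin 3 → ℝ) : 0 < relE U vs Bs := by
  have hρ : 0 < dens U := hU.1
  have hE : 0 < intE U := hU.2
  have h1 := mul_nonneg hρ.le (sq3_nonneg (vel U - vs))
  have h2 := sq3_nonneg (magB U - Bs)
  rw [relE]
  positivity

theorem dirDot_sub {d : ℕ} (hd : d ≤ 3) (ξ : Fin d → ℝ) (a b : Fin 3 → ℝ) :
    dirDot hd ξ (a - b) = dirDot hd ξ a - dirDot hd ξ b := by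
  simp [dirDot, mul_sub, Finset.sum_sub_distrib]

theorem dirDot_neg_left {d : ℕ} (hd : d ≤ 3) (ξ : Fin d → ℝ) (a : Fin 3 → ℝ) :
    dirDot hd (-ξ) a = -dirDot hd ξ a := by
  simp [dirDot]

theorem sum_mul_dirDot_eq_zero {d : ℕ} (hd : d ≤ 3) {ι : Type*} [Fintype ι] {s : ι → ℝ}
    {ξ : ι → Fin d → ℝ} (h : ∑ j, s j • ξ j = 0) (w : Fin 3 → ℝ) :
    ∑ j, s j * dirDot hd (ξ j) w = 0 := by
  simp only [dirDot, Finset.mul_sum]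
  rw [Finset.sum_comm]
  refine Finset.sum_eq_zero fun k _ => ?_
  have hk : ∑ j, s j * ξ j k = 0 := by simpa using congrFun h k
  simp only [← mul_assoc, ← Finset.sum_mul, hk, zero_mul]

theorem dirFlux_nstar_le {pfun : ℝ → ℝ → ℝ} (hEOS : IsEOS pfun) {d : ℕ} (hd : d ≤ 3)
    {ξ : Fin d → ℝ} (hξ : unitVec ξ) {U : MHDState} (hU : U ∈ Gset) (vs Bs : Fin 3 → ℝ) :
    dot8 (dirFlux pfun hd ξ U) (nstar vs Bs) - dirDot hd ξ (magB U) * dot3 vs Bs ≤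
      dirDot hd ξ (vel U) * (relE U vs Bs - sq3 (magB U - Bs) / 2)
        + dirDot hd ξ vs * (sq3 (magB U - Bs) / 2) - dirDot hd ξ vs * (sq3 Bs / 2)
        + waveC pfun hd ξ U * relE U vs Bs := by
  have h := fast_wave_bound hEOS hd hξ hU vs Bs
  have hB : sq3 (magB U) = 2 * dot3 (magB U - Bs) (magB U) - sq3 (magB U - Bs) + sq3 Bs := by
    simp only [sq3, dot3, Fin.sum_univ_three, Pi.sub_apply]
    ring
  rw [dot8_dirFlux_nstar pfun hd ξ (ne_of_gt hU.1), ptot, hB]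
  rw [dirDot_sub] at h
  linarith

theorem sum_sum_nonneg_of_symm {ι : Type*} [Fintype ι] (f : ι → ι → ℝ)
    (h : ∀ i j, 0 ≤ f i j + f j i) : 0 ≤ ∑ i, ∑ j, f i j := by
  have h1 : 0 ≤ ∑ i, ∑ j, (f i j + f j i) :=
    Finset.sum_nonneg fun i _ => Finset.sum_nonneg fun j _ => h i j
  have h2 : ∑ i, ∑ j, f j i = ∑ i, ∑ j, f i j := Finset.sum_comm
  simp only [Finset.sum_add_distrib, h2] at h1
  linarith

theorem norm3_extDir_sub_le {d : ℕ} (hd : d ≤ 3) {ξ ζ : Fin d → ℝ} (hξ : unitVec ξ)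
    (hζ : unitVec ζ) : norm3 (extDir ξ - extDir ζ) ≤ 2 := by
  have h : sq3 (extDir ξ - extDir ζ) + sq3 (extDir ξ + extDir ζ) =
      2 * (sq3 (extDir ξ) + sq3 (extDir ζ)) := by
    simp only [sq3, dot3, Fin.sum_univ_three, Pi.add_apply, Pi.sub_apply]
    ring
  rw [sq3_extDir hd hξ, sq3_extDir hd hζ] at h
  have := sq3_nonneg (extDir ξ + extDir ζ)
  exact Real.sqrt_le_iff.2 ⟨zero_le_two, by linarith⟩

/-- The total outflow of the relative energy through a closed polytope. -/
theorem sum_dirFlux_nstar_le {pfun : ℝ → ℝ → ℝ} (hEOS : IsEOS pfun) {d : ℕ} (hd : d ≤ 3) {N : ℕ}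
    {s : Fin N → ℝ} (hs : ∀ j, 0 < s j) {ξ : Fin N → Fin d → ℝ} (hξ : ∀ j, unitVec (ξ j))
    (hG : ∑ j, s j • ξ j = 0) {U : Fin N → MHDState} (hU : ∀ j, U j ∈ Gset)
    (vs Bs : Fin 3 → ℝ) :
    ∑ j, s j * (dot8 (dirFlux pfun hd (ξ j) (U j)) (nstar vs Bs)
        - dirDot hd (ξ j) (magB (U j)) * dot3 vs Bs) ≤
      ∑ j, s j * (alphaHat pfun hd s ξ U j * relE (U j) vs Bs) := by
  rcases Nat.eq_zero_or_pos N with rfl | hN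
  · simp
  have : Nonempty (Fin N) := ⟨⟨0, hN⟩⟩
  have hS : 0 < ∑ i, s i := Finset.sum_pos (fun i _ => hs i) Finset.univ_nonempty
  set S := ∑ i, s i with hSdef
  set R : Fin N → ℝ := fun j => relE (U j) vs Bs with hRdef
  set T : Fin N → ℝ := fun j => sq3 (magB (U j) - Bs) / 2 with hTdef
  set K : Fin N → Fin N → ℝ := fun j i =>
    norm3 (magB (U j) - magB (U i)) / (√(dens (U j)) + √(dens (U i))) with hKdef
  set g : Fin N → Fin N → ℝ := fun j i =>
    dirDot hd (fun k => ξ j k - ξ i k) (roeV (U j) (U i) - vs) with hgdef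
  have hpt : ∀ j, dot8 (dirFlux pfun hd (ξ j) (U j)) (nstar vs Bs)
        - dirDot hd (ξ j) (magB (U j)) * dot3 vs Bs ≤
      alphaHat pfun hd s ξ U j * R j - dirDot hd (ξ j) vs * (sq3 Bs / 2)
        - S⁻¹ * ∑ i, s i * (2 * K j i * R j + g j i * T j) := by
    intro j
    have h1 := dirFlux_nstar_le hEOS hd (hξ j) (hU j) vs Bs
    have hT0 : 0 ≤ T j := div_nonneg (sq3_nonneg _) zero_le_two
    have hRT : 0 ≤ R j - T j := by
      have := sq3_le_two_mul_relE (hU j) vs Bs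
      have := mul_nonneg (le_of_lt (hU j).1) (sq3_nonneg (vel (U j) - vs))
      simp only [hRdef, hTdef]
      linarith
    have hvs : ∑ i, s i * dirDot hd (fun k => ξ j k - ξ i k) vs = S * dirDot hd (ξ j) vs := by
      have h2 : ∀ i, dirDot hd (fun k => ξ j k - ξ i k) vs =
          dirDot hd (ξ j) vs - dirDot hd (ξ i) vs := by
        intro i
        simp only [dirDot, sub_mul, Finset.sum_sub_distrib]
      simp only [h2, mul_sub, Finset.sum_sub_distrib, sum_mul_dirDot_eq_zero hd hG,
        ← Finset.sum_mul, sub_zero, hSdef]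
    have hsum : S⁻¹ * ∑ i, s i * (2 * K j i * R j + g j i * T j) =
        2 * S⁻¹ * (∑ i, s i * K j i) * R j
          + (S⁻¹ * (∑ i, s i * dirDot hd (fun k => ξ j k - ξ i k) (roeV (U j) (U i)))
            - dirDot hd (ξ j) vs) * T j := by
      have h3 : ∑ i, s i * (2 * K j i * R j + g j i * T j) =
          2 * (∑ i, s i * K j i) * R j
          + ((∑ i, s i * dirDot hd (fun k => ξ j k - ξ i k) (roeV (U j) (U i)))
            - S * dirDot hd (ξ j) vs) * T j := by
        rw [← hvs, ← Finset.sum_sub_distrib, Finset.mul_sum, Finset.sum_mul, Finset.sum_mul,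
          ← Finset.sum_add_distrib]
        refine Finset.sum_congr rfl fun i _ => ?_
        simp only [hgdef, dirDot_sub]
        ring
      rw [h3]
      field_simp
    rw [hsum, alphaHat]
    set V := S⁻¹ * ∑ i, s i * dirDot hd (fun k => ξ j k - ξ i k) (roeV (U j) (U i))
    have h4 := mul_le_mul_of_nonneg_right (le_max_left (dirDot hd (ξ j) (vel (U j))) V) hRT
    have h5 := mul_le_mul_of_nonneg_right (le_max_right (dirDot hd (ξ j) (vel (U j))) V) hT0
    simp only [hRdef, hTdef, hKdef] at h4 h5 ⊢
    linarith
  have hzero : ∑ j, s j * (dirDot hd (ξ j) vs * (sq3 Bs / 2)) = 0 := by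
    simp only [← mul_assoc, ← Finset.sum_mul, sum_mul_dirDot_eq_zero hd hG, zero_mul]
  have hsym : 0 ≤ ∑ j, ∑ i, s j * (s i * (2 * K j i * R j + g j i * T j)) := by
    refine sum_sum_nonneg_of_symm _ fun j i => ?_
    have hK : K i j = K j i := by
      simp only [hKdef, norm3_sub_comm (magB (U i)), add_comm (√(dens (U i)))]
    have hg : g i j = -g j i := by
      simp only [hgdef, roeV_comm (U i), dirDot, ← Finset.sum_neg_distrib]
      exact Finset.sum_congr rfl fun k _ => by ring
    have hb := roe_magnetic_bound (hU j) (hU i) (norm3_extDir_sub_le hd (hξ j) (hξ i)) vs Bs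
    rw [← extDir_sub, ← dirDot_eq_dot3 hd] at hb
    have hb' : 0 ≤ 2 * K j i * (R j + R i) + g j i * (T j - T i) := by
      have := (abs_le.1 hb).1
      simp only [hKdef, hRdef, hgdef, hTdef]
      linarith
    rw [hK, hg]
    refine (mul_nonneg (mul_pos (hs j) (hs i)).le hb').trans (le_of_eq ?_)
    ring
  calc _ ≤ ∑ j, s j * (alphaHat pfun hd s ξ U j * R j - dirDot hd (ξ j) vs * (sq3 Bs / 2)
        - S⁻¹ * ∑ i, s i * (2 * K j i * R j + g j i * T j)) :=
        Finset.sum_le_sum fun j _ => mul_le_mul_of_nonneg_left (hpt j) (hs j).le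
    _ = ∑ j, s j * (alphaHat pfun hd s ξ U j * R j)
        - S⁻¹ * ∑ j, ∑ i, s j * (s i * (2 * K j i * R j + g j i * T j)) := by
        simp only [mul_sub, Finset.sum_sub_distrib, hzero, sub_zero, ← Finset.mul_sum]
        congr 1
        rw [Finset.mul_sum]
        exact Finset.sum_congr rfl fun j _ => by ring
    _ ≤ _ := sub_le_self _ (mul_nonneg (inv_nonneg.2 hS.le) hsym)

theorem two_state_dirFlux_nstar_le {pfun : ℝ → ℝ → ℝ} (hEOS : IsEOS pfun) {d : ℕ} (hd : d ≤ 3)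
    {ξ : Fin d → ℝ} (hξ : unitVec ξ) {Um Up : MHDState} (hm : Um ∈ Gset) (hp : Up ∈ Gset)
    (vs Bs : Fin 3 → ℝ) :
    dot8 (dirFlux pfun hd ξ Up) (nstar vs Bs) - dot8 (dirFlux pfun hd ξ Um) (nstar vs Bs)
        - dirDot hd ξ (magB Up - magB Um) * dot3 vs Bs ≤
      alphaR pfun hd ξ Up Um * relE Up vs Bs - alphaL pfun hd ξ Um Up * relE Um vs Bs := by
  have hξ' : unitVec (-ξ) := by simpa [unitVec] using hξ
  have h := sum_dirFlux_nstar_le hEOS hd (s := ![1, 1]) (ξ := ![ξ, -ξ]) (U := ![Up, Um])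
    (by simp [Fin.forall_fin_two]) (by simp [Fin.forall_fin_two, hξ, hξ']) (by simp)
    (by simp [Fin.forall_fin_two, hm, hp]) vs Bs
  have hflux : dirFlux pfun hd (-ξ) Um = -dirFlux pfun hd ξ Um := by simp [dirFlux]
  have hdot : dot8 (-dirFlux pfun hd ξ Um) (nstar vs Bs) =
      -dot8 (dirFlux pfun hd ξ Um) (nstar vs Bs) := by simp [dot8]
  have hzero : ∀ w, dirDot hd (fun _ => (0 : ℝ)) w = 0 := fun w => by simp [dirDot]
  have hdbl : ∀ w, dirDot hd (fun k => ξ k + ξ k) w = 2 * dirDot hd ξ w := fun w => by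
    simp only [dirDot, Finset.mul_sum]
    exact Finset.sum_congr rfl fun k _ => by ring
  have hdbl' : ∀ w, dirDot hd (fun k => -ξ k - ξ k) w = -(2 * dirDot hd ξ w) := fun w => by
    rw [← hdbl, ← dirDot_neg_left]
    congr 1
    funext k
    simp only [Pi.neg_apply]
    ring
  have hnorm : norm3 0 = 0 := by simp [norm3, sq3, dot3]
  have hR : alphaHat pfun hd ![1, 1] ![ξ, -ξ] ![Up, Um] 0 = alphaR pfun hd ξ Up Um := by
    simp [alphaHat, alphaR, hzero, hdbl, hnorm, one_add_one_eq_two]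
  have hL : alphaHat pfun hd ![1, 1] ![ξ, -ξ] ![Up, Um] 1 = -alphaL pfun hd ξ Um Up := by
    simp [alphaHat, alphaL, hzero, hdbl', hnorm, one_add_one_eq_two, waveC_neg, dirDot_neg_left,
      max_neg_neg]
    ring
  simp only [Fin.sum_univ_two, hR, hL, Matrix.cons_val_zero, Matrix.cons_val_one, hflux, hdot,
    dirDot_neg_left] at h
  rw [dirDot_sub]
  linarith

theorem dirDot_vel_lt_alphaR {pfun : ℝ → ℝ → ℝ} (hEOS : IsEOS pfun) {d : ℕ} (hd : d ≤ 3)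
    (ξ : Fin d → ℝ) {U : MHDState} (hU : U ∈ Gset) (V : MHDState) :
    max (dirDot hd ξ (vel U)) (dirDot hd ξ (roeV U V)) < alphaR pfun hd ξ U V := by
  have h1 := waveC_pos hEOS hd ξ hU
  have h2 : 0 ≤ norm3 (magB U - magB V) / (√(dens U) + √(dens V)) :=
    div_nonneg (norm3_nonneg _) (by positivity)
  rw [alphaR]
  linarith

theorem alphaL_lt_dirDot_vel {pfun : ℝ → ℝ → ℝ} (hEOS : IsEOS pfun) {d : ℕ} (hd : d ≤ 3)
    (ξ : Fin d → ℝ) {U : MHDState} (hU : U ∈ Gset) (V : MHDState) :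
    alphaL pfun hd ξ U V < min (dirDot hd ξ (vel U)) (dirDot hd ξ (roeV U V)) := by
  have h1 := waveC_pos hEOS hd ξ hU
  have h2 : 0 ≤ norm3 (magB U - magB V) / (√(dens U) + √(dens V)) :=
    div_nonneg (norm3_nonneg _) (by positivity)
  rw [alphaL]
  linarith

theorem alphaL_lt_alphaR {pfun : ℝ → ℝ → ℝ} (hEOS : IsEOS pfun) {d : ℕ} (hd : d ≤ 3)
    (ξ : Fin d → ℝ) {U V : MHDState} (hU : U ∈ Gset) (hV : V ∈ Gset) :
    alphaL pfun hd ξ U V < alphaR pfun hd ξ V U := by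
  have h1 := (le_max_right _ _).trans_lt (dirDot_vel_lt_alphaR hEOS hd ξ hV U)
  have h2 := (alphaL_lt_dirDot_vel hEOS hd ξ hU V).trans_le (min_le_right _ _)
  rw [roeV_comm V U] at h1
  exact h2.trans h1

theorem clamped_gap_pos {a b : ℝ} (h : a < b) : 0 < max b 0 - min a 0 := by
  rcases le_or_gt b 0 with hb | hb
  · linarith [le_max_right b 0, min_le_left a 0]
  · linarith [le_max_left b 0, min_le_right a 0]

theorem abs_dot3_le_relE {U : MHDState} (hU : U ∈ Gset) (vs Bs : Fin 3 → ℝ) :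
    |dot3 (vel U - vs) (magB U - Bs)| ≤ (√(dens U))⁻¹ * relE U vs Bs := by
  have hρ : 0 < dens U := hU.1
  have hr := Real.sqrt_pos.2 hρ
  have h1 := abs_dot3_le (vel U - vs) (magB U - Bs)
  have h2 := sq3_le_two_mul_relE hU vs Bs
  rw [← norm3_sq, ← norm3_sq, ← Real.sq_sqrt hρ.le] at h2
  rw [inv_mul_eq_div, le_div_iff₀ hr]
  have h3 := mul_le_mul_of_nonneg_right h1 hr.le
  nlinarith [sq_nonneg (√(dens U) * norm3 (vel U - vs) - norm3 (magB U - Bs))]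

theorem dot8_hllFlux_penalty_le {pfun : ℝ → ℝ → ℝ} (hEOS : IsEOS pfun) {d : ℕ} (hd : d ≤ 3)
    {ξ : Fin d → ℝ} (hξ : unitVec ξ) {Um Up : MHDState} (hm : Um ∈ Gset) (hp : Up ∈ Gset)
    {σm σp : ℝ} (hσm : σm ≤ 0) (hσ : 0 < σp - σm) (hr : alphaR pfun hd ξ Up Um ≤ σp)
    (hl : σm ≤ alphaL pfun hd ξ Um Up) (vs Bs : Fin 3 → ℝ) :
    dot8 (hllFlux pfun hd ξ Um Up σm σp
        - (σm / (σp - σm) * dirDot hd ξ (magB Up - magB Um)) • source Um) (nstar vs Bs) ≤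
      dot8 (dirFlux pfun hd ξ Um) (nstar vs Bs)
        + (-σm - σm / (σp - σm) * (√(dens Um))⁻¹ * |dirDot hd ξ (magB Um - magB Up)|)
          * relE Um vs Bs := by
  have h := two_state_dirFlux_nstar_le hEOS hd hξ hm hp vs Bs
  have hη : 0 ≤ -(σm / (σp - σm)) := neg_nonneg.2 (div_nonpos_of_nonpos_of_nonneg hσm hσ.le)
  have hRp := relE_pos hp vs Bs
  have hRm := relE_pos hm vs Bs
  have hs := abs_dot3_le_relE hm vs Bs
  have habs : |dirDot hd ξ (magB Um - magB Up)| = |dirDot hd ξ (magB Up - magB Um)| := by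
    rw [dirDot_sub, dirDot_sub, abs_sub_comm]
  rw [habs, dot8_sub, dot8_smul, dot8_source_nstar, hllFlux, dot8_smul, dot8_add, dot8_sub,
    dot8_smul, dot8_smul, dot8_smul, dot8_sub, dot8_nstar (ne_of_gt hm.1),
    dot8_nstar (ne_of_gt hp.1)]
  set Δb := dirDot hd ξ (magB Up - magB Um)
  set Fp := dot8 (dirFlux pfun hd ξ Up) (nstar vs Bs)
  set Fm := dot8 (dirFlux pfun hd ξ Um) (nstar vs Bs)
  have hpen : -(σm / (σp - σm)) * (Δb * dot3 (vel Um - vs) (magB Um - Bs)) ≤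
      -(σm / (σp - σm)) * (|Δb| * ((√(dens Um))⁻¹ * relE Um vs Bs)) := by
    refine mul_le_mul_of_nonneg_left ?_ hη
    refine (le_abs_self _).trans ?_
    rw [abs_mul]
    exact mul_le_mul_of_nonneg_left hs (abs_nonneg _)
  have hmid : 0 ≤ σp * relE Up vs Bs - σm * relE Um vs Bs - Fp + Fm + Δb * dot3 vs Bs := by
    have h1 := mul_le_mul_of_nonneg_right hr hRp.le
    have h2 := mul_le_mul_of_nonneg_right hl hRm.le
    linarith
  have hhll : (σp - σm)⁻¹ * (σp * Fm - σm * Fp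
        + σm * σp * ((relE Up vs Bs - sq3 Bs / 2) - (relE Um vs Bs - sq3 Bs / 2))) =
      Fm - σm * relE Um vs Bs - σm / (σp - σm) * (Δb * dot3 vs Bs)
        - -(σm / (σp - σm)) *
          (σp * relE Up vs Bs - σm * relE Um vs Bs - Fp + Fm + Δb * dot3 vs Bs) := by
    field_simp
    ring
  rw [hhll]
  have := mul_nonneg hη hmid
  linarith

theorem dens_hllFlux_penalty_le (pfun : ℝ → ℝ → ℝ) {d : ℕ} (hd : d ≤ 3)
    (ξ : Fin d → ℝ) {Um Up : MHDState} (hm : 0 < dens Um) (hp : 0 < dens Up)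
    {σm σp : ℝ} (hσm : σm ≤ 0) (hσ : 0 < σp - σm) (hr : dirDot hd ξ (vel Up) ≤ σp)
    (hl : σm ≤ dirDot hd ξ (vel Um)) (c : ℝ) :
    dens (hllFlux pfun hd ξ Um Up σm σp - c • source Um) ≤
      (dirDot hd ξ (vel Um) - σm) * dens Um := by
  have hη : 0 ≤ -(σm / (σp - σm)) := neg_nonneg.2 (div_nonpos_of_nonpos_of_nonneg hσm hσ.le)
  have h : dens (hllFlux pfun hd ξ Um Up σm σp - c • source Um) =
      (σp - σm)⁻¹ * (σp * dens (dirFlux pfun hd ξ Um) - σm * dens (dirFlux pfun hd ξ Up)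
        + σm * σp * (dens Up - dens Um)) := by
    simp [hllFlux, dens, source, mk]
    ring
  have hhll : dens (hllFlux pfun hd ξ Um Up σm σp - c • source Um) =
      (dirDot hd ξ (vel Um) - σm) * dens Um - -(σm / (σp - σm)) *
        ((dirDot hd ξ (vel Um) - σm) * dens Um + (σp - dirDot hd ξ (vel Up)) * dens Up) := by
    rw [h, dens_dirFlux, dens_dirFlux]
    field_simp
    ring
  rw [hhll]
  exact sub_le_self _ (mul_nonneg hη (add_nonneg
    (mul_nonneg (sub_nonneg.2 hl) hm.le) (mul_nonneg (sub_nonneg.2 hr) hp.le)))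

theorem dirDot_vel_le_alphaHat {pfun : ℝ → ℝ → ℝ} (hEOS : IsEOS pfun) {d : ℕ} (hd : d ≤ 3) {N : ℕ}
    {s : Fin N → ℝ} (hs : ∀ j, 0 ≤ s j) (ξ : Fin N → Fin d → ℝ) {U : Fin N → MHDState}
    (j : Fin N) (hU : U j ∈ Gset) :
    dirDot hd (ξ j) (vel (U j)) ≤ alphaHat pfun hd s ξ U j := by
  have h1 := waveC_pos hEOS hd (ξ j) hU
  have h2 : 0 ≤ 2 * (∑ i, s i)⁻¹ * ∑ i, s i *
      (norm3 (magB (U j) - magB (U i)) / (√(dens (U j)) + √(dens (U i)))) :=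
    mul_nonneg (mul_nonneg zero_le_two (inv_nonneg.2 (Finset.sum_nonneg fun i _ => hs i)))
      (Finset.sum_nonneg fun i _ => mul_nonneg (hs i)
        (div_nonneg (norm3_nonneg _) (by positivity)))
  rw [alphaHat]
  linarith [le_max_left (dirDot hd (ξ j) (vel (U j)))
    ((∑ i, s i)⁻¹ * ∑ i, s i * dirDot hd (fun k => ξ j k - ξ i k) (roeV (U j) (U i)))]

/-- A CFL-limited update of a positive convex combination stays positive. -/
theorem cfl_update_pos {N Q Qt : ℕ} (hN : 1 ≤ N) (hQ : 1 ≤ Q) {A : ℝ} (hA : 0 < A)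
    {len : Fin N → ℝ} {ω : Fin Q → ℝ} (hω : ∀ q, 0 < ω q)
    {wt : Fin Qt → ℝ} (hwt : ∀ q, 0 ≤ wt q) {a : Fin Qt → ℝ} (ha : ∀ q, 0 ≤ a q)
    {wb R α X : Fin N → Fin Q → ℝ} (hR : ∀ j q, 0 < R j q) {τ : ℝ} (hτ : 0 < τ)
    (hCFL : ∀ j q, τ * (len j / A) * α j q < wb j q / ω q)
    (hX : ∑ j, ∑ q, len j * ω q * X j q ≤ ∑ j, ∑ q, len j * ω q * (α j q * R j q)) :
    0 < (∑ q, wt q * a q) + (∑ j, ∑ q, wb j q * R j q)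
      - τ / A * ∑ j, ∑ q, len j * ω q * X j q := by
  have : Nonempty (Fin N) := ⟨⟨0, hN⟩⟩
  have : Nonempty (Fin Q) := ⟨⟨0, hQ⟩⟩
  have h1 : 0 ≤ ∑ q, wt q * a q := Finset.sum_nonneg fun q _ => mul_nonneg (hwt q) (ha q)
  have h2 := mul_le_mul_of_nonneg_left hX (div_pos hτ hA).le
  have h3 : τ / A * ∑ j, ∑ q, len j * ω q * (α j q * R j q) < ∑ j, ∑ q, wb j q * R j q := by
    simp only [Finset.mul_sum]
    refine Finset.sum_lt_sum_of_nonempty Finset.univ_nonempty fun j _ =>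
      Finset.sum_lt_sum_of_nonempty Finset.univ_nonempty fun q _ => ?_
    have h := mul_lt_mul_of_pos_right ((lt_div_iff₀ (hω q)).1 (hCFL j q)) (hR j q)
    refine (le_of_eq ?_).trans_lt h
    ring
  linarith

/-- Theorem 4.3: positivity preservation of the high-order 2D DG scheme with
the upwind-discretized Godunov–Powell penalty term
(one cell, one forward-Euler step). -/
theorem twoD_high_order_scheme_PP (pfun : ℝ → ℝ → ℝ) (hEOS : IsEOS pfun)
    {N : ℕ} (hN : 1 ≤ N) {Q : ℕ} (hQ : 1 ≤ Q) {Qt : ℕ}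
    (areaK : ℝ) (hK : 0 < areaK)
    (len : Fin N → ℝ) (hlen : ∀ j, 0 < len j)
    (ξ : Fin N → Fin 2 → ℝ) (hξ : ∀ j, unitVec (ξ j))
    (hGreen : (∑ j, len j • ξ j) = 0)
    (ω : Fin Q → ℝ) (hω : ∀ q, 0 < ω q) (hωsum : (∑ q, ω q) = 1)
    (Uint Uext : Fin N → Fin Q → MHDState)
    (hUint : ∀ j q, Uint j q ∈ Gset) (hUext : ∀ j q, Uext j q ∈ Gset)
    (Ut : Fin Qt → MHDState) (hUt : ∀ q, Ut q ∈ Gset)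
    (wt : Fin Qt → ℝ) (hwt : ∀ q, 0 < wt q)
    (wb : Fin N → Fin Q → ℝ) (hwb : ∀ j q, 0 < wb j q)
    (hwsum : (∑ q, wt q) + (∑ j, ∑ q, wb j q) = 1)
    (Ubar : MHDState)
    (hUbar : Ubar = (∑ q, wt q • Ut q) + ∑ j, ∑ q, wb j q • Uint j q)
    (hLDF : (∑ j, ∑ q, len j * ω q * dirDot d2le3 (ξ j) (magB (Uint j q))) = 0)
    (σr σl : Fin N → Fin Q → ℝ)
    (hr : ∀ j q, alphaR pfun d2le3 (ξ j) (Uext j q) (Uint j q) ≤ σr j q)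
    (hl : ∀ j q, σl j q ≤ alphaL pfun d2le3 (ξ j) (Uint j q) (Uext j q))
    (η : Fin N → Fin Q → ℝ)
    (hη : ∀ j q, η j q = min (σl j q) 0 / (max (σr j q) 0 - min (σl j q) 0))
    (Δt : ℝ) (hΔt : 0 < Δt)
    (hCFL : ∀ j q, Δt * (len j / areaK) *
        (alphaHat pfun d2le3 len ξ (fun i => Uint i q) j - min (σl j q) 0
          - η j q * (Real.sqrt (dens (Uint j q)))⁻¹ *
              |dirDot d2le3 (ξ j) (magB (Uint j q) - magB (Uext j q))|)
        < wb j q / ω q) :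
    Ubar - (Δt / areaK) •
        (∑ j, ∑ q, (len j * ω q) •
          (hllFlux pfun d2le3 (ξ j) (Uint j q) (Uext j q)
              (min (σl j q) 0) (max (σr j q) 0)
            - (η j q * dirDot d2le3 (ξ j) (magB (Uext j q) - magB (Uint j q))) •
                source (Uint j q))) ∈ Gset := by
  have hIR : ∀ j q, dirDot d2le3 (ξ j) (vel (Uext j q)) ≤ max (σr j q) 0 := fun j q =>
    ((le_max_left _ _).trans (dirDot_vel_lt_alphaR hEOS d2le3 (ξ j) (hUext j q) _).le).trans
      ((hr j q).trans (le_max_left _ _))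
  have hIL : ∀ j q, min (σl j q) 0 ≤ dirDot d2le3 (ξ j) (vel (Uint j q)) := fun j q =>
    (min_le_left _ _).trans ((hl j q).trans
      ((alphaL_lt_dirDot_vel hEOS d2le3 (ξ j) (hUint j q) _).le.trans (min_le_left _ _)))
  have hgap : ∀ j q, 0 < max (σr j q) 0 - min (σl j q) 0 := fun j q =>
    clamped_gap_pos ((hl j q).trans_lt
      ((alphaL_lt_alphaR hEOS d2le3 (ξ j) (hUint j q) (hUext j q)).trans_le (hr j q)))
  have hη0 : ∀ j q, η j q ≤ 0 := fun j q => by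
    rw [hη]
    exact div_nonpos_of_nonpos_of_nonneg (min_le_right _ _) (hgap j q).le
  set F : Fin N → Fin Q → MHDState := fun j q =>
    hllFlux pfun d2le3 (ξ j) (Uint j q) (Uext j q) (min (σl j q) 0) (max (σr j q) 0)
      - (η j q * dirDot d2le3 (ξ j) (magB (Uext j q) - magB (Uint j q))) • source (Uint j q)
    with hF
  set V : MHDState := Ubar - (Δt / areaK) • ∑ j, ∑ q, (len j * ω q) • F j q with hV
  have hVdens : 0 < dens V := by
    have h := cfl_update_pos hN hQ hK hω (fun q => (hwt q).le)
      (a := fun q => dens (Ut q)) (fun q => le_of_lt (hUt q).1)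
      (R := fun j q => dens (Uint j q)) (fun j q => (hUint j q).1) hΔt hCFL
      (X := fun j q => dens (F j q)) ?_
    · refine h.trans_eq ?_
      rw [hV, hUbar]
      simp [dens]
    · refine Finset.sum_le_sum fun j _ => Finset.sum_le_sum fun q _ =>
        mul_le_mul_of_nonneg_left ?_ (mul_pos (hlen j) (hω q)).le
      refine (dens_hllFlux_penalty_le pfun d2le3 (ξ j) (hUint j q).1 (hUext j q).1
        (min_le_right _ _) (hgap j q) (hIR j q) (hIL j q) _).trans ?_
      refine mul_le_mul_of_nonneg_right ?_ (le_of_lt (hUint j q).1)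
      have h1 := dirDot_vel_le_alphaHat hEOS d2le3 (fun j => (hlen j).le) ξ
        (U := fun i => Uint i q) j (hUint j q)
      have h2 : 0 ≤ -η j q * ((√(dens (Uint j q)))⁻¹ *
          |dirDot d2le3 (ξ j) (magB (Uint j q) - magB (Uext j q))|) :=
        mul_nonneg (neg_nonneg.2 (hη0 j q)) (by positivity)
      linarith
  refine ⟨hVdens, ?_⟩
  set vs := vel V
  set Bs := magB V
  have hVE : intE V = dot8 V (nstar vs Bs) + sq3 Bs / 2 := by
    rw [dot8_nstar hVdens.ne']
    simp [relE, vs, Bs, sq3, dot3]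
  have h := cfl_update_pos hN hQ hK hω (fun q => (hwt q).le)
    (a := fun q => relE (Ut q) vs Bs) (fun q => (relE_pos (hUt q) vs Bs).le)
    (R := fun j q => relE (Uint j q) vs Bs) (fun j q => relE_pos (hUint j q) vs Bs) hΔt hCFL
    (X := fun j q => dot8 (F j q) (nstar vs Bs)) ?_
  · rw [hVE]
    refine h.trans_eq ?_
    have hs : sq3 Bs / 2 = (∑ q, wt q * (sq3 Bs / 2)) + ∑ j, ∑ q, wb j q * (sq3 Bs / 2) := by
      simp only [← Finset.sum_mul, ← add_mul, hwsum, one_mul]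
    rw [hV, hUbar, dot8_sub, dot8_smul, dot8_add, hs]
    simp only [dot8_sum, dot8_smul, dot8_nstar (ne_of_gt (hUt _).1),
      dot8_nstar (ne_of_gt (hUint _ _).1), mul_sub, Finset.sum_sub_distrib]
    ring
  · have hflux : ∑ j, ∑ q, len j * ω q * dot8 (dirFlux pfun d2le3 (ξ j) (Uint j q)) (nstar vs Bs) ≤
        ∑ j, ∑ q, len j * ω q *
          (alphaHat pfun d2le3 len ξ (fun i => Uint i q) j * relE (Uint j q) vs Bs) := by
      have h1 : ∑ q, ω q * ∑ j, len j * (dot8 (dirFlux pfun d2le3 (ξ j) (Uint j q)) (nstar vs Bs)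
            - dirDot d2le3 (ξ j) (magB (Uint j q)) * dot3 vs Bs) ≤
          ∑ q, ω q * ∑ j, len j *
            (alphaHat pfun d2le3 len ξ (fun i => Uint i q) j * relE (Uint j q) vs Bs) :=
        Finset.sum_le_sum fun q _ => mul_le_mul_of_nonneg_left
          (sum_dirFlux_nstar_le hEOS d2le3 hlen hξ hGreen (fun j => hUint j q) vs Bs) (hω q).le
      simp only [Finset.mul_sum] at h1
      rw [Finset.sum_comm, Finset.sum_comm (s := Finset.univ (α := Fin Q))] at h1
      have h2 : ∑ j, ∑ q, len j * ω q * dirDot d2le3 (ξ j) (magB (Uint j q)) * dot3 vs Bs = 0 := by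
        simp only [← Finset.sum_mul, hLDF, zero_mul]
      calc _ = ∑ j, ∑ q, ω q * (len j *
              (dot8 (dirFlux pfun d2le3 (ξ j) (Uint j q)) (nstar vs Bs)
                - dirDot d2le3 (ξ j) (magB (Uint j q)) * dot3 vs Bs))
            + ∑ j, ∑ q, len j * ω q * dirDot d2le3 (ξ j) (magB (Uint j q)) * dot3 vs Bs := by
            simp only [← Finset.sum_add_distrib]
            exact Finset.sum_congr rfl fun j _ => Finset.sum_congr rfl fun q _ => by ring
        _ ≤ _ := by
            rw [h2, add_zero]
            refine h1.trans_eq ?_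
            exact Finset.sum_congr rfl fun j _ => Finset.sum_congr rfl fun q _ => by ring
    have hedge : ∑ j, ∑ q, len j * ω q * dot8 (F j q) (nstar vs Bs) ≤
        ∑ j, ∑ q, len j * ω q * (dot8 (dirFlux pfun d2le3 (ξ j) (Uint j q)) (nstar vs Bs)
          + (-min (σl j q) 0 - η j q * (√(dens (Uint j q)))⁻¹ *
            |dirDot d2le3 (ξ j) (magB (Uint j q) - magB (Uext j q))|) * relE (Uint j q) vs Bs) := by
      refine Finset.sum_le_sum fun j _ => Finset.sum_le_sum fun q _ =>
        mul_le_mul_of_nonneg_left ?_ (mul_pos (hlen j) (hω q)).le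
      simp only [hF, hη]
      exact dot8_hllFlux_penalty_le hEOS d2le3 (hξ j) (hUint j q) (hUext j q) (min_le_right _ _)
        (hgap j q) ((hr j q).trans (le_max_left _ _)) ((min_le_left _ _).trans (hl j q)) vs Bs
    refine hedge.trans ?_
    simp only [mul_add, Finset.sum_add_distrib]
    refine (add_le_add_left hflux _).trans_eq ?_
    simp only [← Finset.sum_add_distrib]
    exact Finset.sum_congr rfl fun j _ => Finset.sum_congr rfl fun q _ => by ring

end MHD
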